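/- (Right-discarding lemma) If 0 ≤ j < i ≤ n and x_j + y_j ≥ x_i + y_i, then for every i' with i < i' ≤ n such that x_j + y_j ≤ x_{i'}, one also has x_i + y_i ≤ x_{i'}, and consequently y_{i'} ≤ x_{i'} − x_i < x_{i'} − x_j. -/

import Mathlib

/-- `pSum L i` is `x_i`: the sum of the first `i` elements of `L` (so `pSum L 0 = 0`). -/
def pSum (L : List ℝ) (i : ℕ) : ℝ := (L.take i).sum

/-- A valid partition of `L`: a partition of `L` into nonempty consecutive blocks
whose totals are non-decreasing from left to right. -/
def ValidPartition (L : List ℝ) (P : List (List ℝ)) : Prop :=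
  P.flatten = L ∧ (∀ B ∈ P, B ≠ []) ∧ List.Chain' (· ≤ ·) (P.map List.sum)

/-- The total of the last block of a partition (`0` for the empty partition). -/
def lastTotal (P : List (List ℝ)) : ℝ := (P.map List.sum).getLastD 0

/-- `wrapLen L` is the wrapping length `y_{|L|}`: the minimum, over all valid
partitions of `L`, of the total of the last block (with `wrapLen [] = 0`,
realized by the empty partition). -/
noncomputable def wrapLen (L : List ℝ) : ℝ :=
  sInf {t | ∃ P, ValidPartition L P ∧ lastTotal P = t}

/-!
Append the block of elements `i + 1, …, k` to an optimal partition of the prefix of length `i`.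
The block has total `x_k - x_i`, so the result is valid as soon as `x_i + y_i ≤ x_k`, and then
`y_k ≤ x_k - x_i`. Under the domination hypothesis, `x_i + y_i ≤ x_j + y_j ≤ x_{i'}`. The minimum
defining `y_i` is attained because the last block of a partition is a suffix of the list, and a list
has only finitely many suffixes.
-/

section List

variable {α : Type*} (L : List α) {i k : ℕ}

lemma take_append_drop_take (hik : i ≤ k) : L.take i ++ (L.take k).drop i = L.take k := by
  simpa only [List.take_take, min_eq_left hik] using List.take_append_drop i (L.take k)

variable {L} in
lemma drop_take_ne_nil (hik : i < k) (hi : i < L.length) : (L.take k).drop i ≠ [] := by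
  simp [hik, hi]

end List

section PrefixSum

variable (L : List ℝ) {i k : ℕ}

lemma sum_drop_take_eq_pSum_sub (hik : i ≤ k) :
    ((L.take k).drop i).sum = pSum L k - pSum L i := by
  rw [eq_sub_iff_add_eq', pSum, pSum, ← List.sum_append, take_append_drop_take L hik]

variable {L} in
lemma strictMonoOn_pSum (hL : ∀ l ∈ L, 0 < l) : StrictMonoOn (pSum L) (Set.Iic L.length) := by
  intro i _ k hk hik
  rw [← sub_pos, ← sum_drop_take_eq_pSum_sub L hik.le]
  exact List.sum_pos _ (fun l hl ↦ hL l (List.mem_of_mem_take (List.mem_of_mem_drop hl)))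
    (drop_take_ne_nil hik (hik.trans_le hk))

end PrefixSum

section LastTotal

variable (P : List (List ℝ))

@[simp]
lemma lastTotal_append_singleton (B : List ℝ) : lastTotal (P ++ [B]) = B.sum := by
  simp [lastTotal]

lemma exists_suffix_flatten_sum_eq_lastTotal : ∃ S, S <:+ P.flatten ∧ S.sum = lastTotal P := by
  rcases P.eq_nil_or_concat' with rfl | ⟨Q, B, rfl⟩
  · exact ⟨[], List.nil_suffix, rfl⟩
  · exact ⟨B, by simp, by simp⟩

variable {P} in
lemma lastTotal_eq_of_mem_getLast? {t : ℝ} (ht : t ∈ (P.map List.sum).getLast?) :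
    lastTotal P = t := by
  rw [lastTotal, List.getLastD_eq_getLast?, Option.mem_def.1 ht, Option.getD_some]

end LastTotal

section ValidPartition

lemma validPartition_nil : ValidPartition [] [] :=
  ⟨rfl, by simp, List.isChain_nil⟩

lemma validPartition_singleton {L : List ℝ} (hL : L ≠ []) : ValidPartition L [L] :=
  ⟨by simp, by simpa using hL, List.isChain_singleton _⟩

lemma exists_validPartition (L : List ℝ) : ∃ P, ValidPartition L P := by
  rcases eq_or_ne L [] with rfl | hL
  · exact ⟨[], validPartition_nil⟩
  · exact ⟨[L], validPartition_singleton hL⟩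

lemma ValidPartition.append_singleton {A B : List ℝ} {P : List (List ℝ)}
    (hP : ValidPartition A P) (hB : B ≠ []) (hPB : lastTotal P ≤ B.sum) :
    ValidPartition (A ++ B) (P ++ [B]) := by
  obtain ⟨hflat, hne, hchain⟩ := hP
  refine ⟨by simp [hflat], by simpa [or_imp, forall_and] using ⟨hne, hB⟩, ?_⟩
  rw [List.map_append]
  refine hchain.append (List.isChain_singleton _) fun s hs t ht ↦ ?_
  obtain rfl : B.sum = t := by simpa using ht
  exact (lastTotal_eq_of_mem_getLast? hs).symm.trans_le hPB

lemma finite_setOf_lastTotal (L : List ℝ) :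
    {t | ∃ P, ValidPartition L P ∧ lastTotal P = t}.Finite := by
  refine (L.tails.finite_toSet.image List.sum).subset ?_
  rintro _ ⟨P, ⟨rfl, -, -⟩, rfl⟩
  simpa using exists_suffix_flatten_sum_eq_lastTotal P

end ValidPartition

section WrapLen

lemma isLeast_wrapLen (L : List ℝ) :
    IsLeast {t | ∃ P, ValidPartition L P ∧ lastTotal P = t} (wrapLen L) := by
  obtain ⟨P, hP⟩ := exists_validPartition L
  have hfin := finite_setOf_lastTotal L
  exact ⟨Set.Nonempty.csInf_mem ⟨_, P, hP, rfl⟩ hfin, fun _ ht ↦ csInf_le hfin.bddBelow ht⟩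

lemma ValidPartition.wrapLen_le {L : List ℝ} {P : List (List ℝ)} (hP : ValidPartition L P) :
    wrapLen L ≤ lastTotal P :=
  (isLeast_wrapLen L).2 ⟨P, hP, rfl⟩

lemma wrapLen_append_le {A B : List ℝ} (hB : B ≠ []) (hAB : wrapLen A ≤ B.sum) :
    wrapLen (A ++ B) ≤ B.sum := by
  obtain ⟨P, hP, hlast⟩ := (isLeast_wrapLen A).1
  simpa using (hP.append_singleton hB (hlast.trans_le hAB)).wrapLen_le

lemma wrapLen_take_le_pSum_sub {L : List ℝ} {i k : ℕ} (hik : i < k) (hi : i < L.length)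
    (h : pSum L i + wrapLen (L.take i) ≤ pSum L k) :
    wrapLen (L.take k) ≤ pSum L k - pSum L i := by
  have hsum := sum_drop_take_eq_pSum_sub L hik.le
  have hblock : wrapLen (L.take i) ≤ ((L.take k).drop i).sum :=
    hsum.symm ▸ le_sub_iff_add_le'.2 h
  have happend := wrapLen_append_le (drop_take_ne_nil hik hi) hblock
  rwa [take_append_drop_take L hik.le, hsum] at happend

end WrapLen

/-- Right-discarding lemma: If `0 ≤ j < i ≤ n` and
`x_j + y_j ≥ x_i + y_i`, then for every `i'` with `i < i' ≤ n` such that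
`x_j + y_j ≤ x_{i'}`, one also has `x_i + y_i ≤ x_{i'}`, and consequently
`y_{i'} ≤ x_{i'} − x_i < x_{i'} − x_j`. -/
theorem stmt_5 (L : List ℝ) (hL : ∀ l ∈ L, 0 < l) (j i : ℕ) (hji : j < i)
    (hin : i ≤ L.length)
    (hdom : pSum L i + wrapLen (L.take i) ≤ pSum L j + wrapLen (L.take j)) :
    ∀ i', i < i' → i' ≤ L.length → pSum L j + wrapLen (L.take j) ≤ pSum L i' →
      pSum L i + wrapLen (L.take i) ≤ pSum L i' ∧
      wrapLen (L.take i') ≤ pSum L i' - pSum L i ∧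
      pSum L i' - pSum L i < pSum L i' - pSum L j := by
  intro i' hi hi' hj
  have hle : pSum L i + wrapLen (L.take i) ≤ pSum L i' := hdom.trans hj
  have hlt : pSum L j < pSum L i := strictMonoOn_pSum hL (hji.le.trans hin) hin hji
  exact ⟨hle, wrapLen_take_le_pSum_sub hi (hi.trans_le hi') hle, sub_lt_sub_left hlt _⟩
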